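/- Let p be a prime with p > 3(h−1), where h is the Coxeter number of Φ. For i ∈ {1,2,3}, let μ_i ∈ X be a sum of distinct roots of Φ, i.e., μ_i = Σ_{γ ∈ S_i} γ for some subset S_i ⊆ Φ (possibly empty). If μ1 + μ2 = μ3 + pσ for some σ ∈ ℤΦ, then σ = 0. -/

import Mathlib

/-!
Suppose `σ ≠ 0` and write it as a sum of short roots with as few summands as possible. Two summands
at an obtuse angle could be replaced by their sum, which is zero or again a short root; so no two of
them are, and pairing with any summand `β` gives `⟨σ, β∨⟩ ≥ 2`.

Sums of distinct roots are permuted by the reflections, and so are the short roots, each of which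
is carried to the highest short root `α₀` by successive simple reflections that raise its height.
As `α₀` pairs nonnegatively with the positive roots, a sum `μ` of distinct roots satisfies
`⟨μ, α₀∨⟩ ≤ ⟨2ρ, α₀∨⟩ = 2(h - 1)`, and the same bound holds for `⟨μ, β∨⟩` with `β` short.

Hence `2p ≤ ⟨pσ, β∨⟩ = ⟨μ₁, β∨⟩ + ⟨μ₂, β∨⟩ + ⟨μ₃, (-β)∨⟩ ≤ 6(h - 1)`, against `p > 3(h - 1)`.
-/

open scoped RealInnerProductSpace

namespace PaperDNN

variable {E : Type*} [NormedAddCommGroup E] [InnerProductSpace ℝ E]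

/-- The coroot pairing `⟨x, α∨⟩ = 2⟪x,α⟫/⟪α,α⟫`. -/
noncomputable def pair (x a : E) : ℝ := 2 * ⟪x, a⟫ / ⟪a, a⟫

/-- `Φ` is a reduced irreducible root system in the Euclidean space `E`. -/
structure IsRootSystem (Φ : Finset E) : Prop where
  nonempty : Φ.Nonempty
  ne_zero : ∀ α ∈ Φ, α ≠ 0
  span_top : Submodule.span ℝ (Φ : Set E) = ⊤
  reduced : ∀ α ∈ Φ, ∀ t : ℝ, t • α ∈ Φ → t = 1 ∨ t = -1
  reflect_mem : ∀ α ∈ Φ, ∀ β ∈ Φ, β - pair β α • α ∈ Φ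
  pair_int : ∀ α ∈ Φ, ∀ β ∈ Φ, ∃ n : ℤ, pair β α = (n : ℝ)
  irred : ∀ S T : Set E, S ∪ T = (Φ : Set E) → S.Nonempty → T.Nonempty →
      (∀ a ∈ S, ∀ b ∈ T, ⟪a, b⟫ = 0) → False

/-- `Δ` is a base of simple roots for `Φ`: every root is a nonnegative or
nonpositive integral combination of the simple roots. -/
structure IsBase (Φ Δ : Finset E) : Prop where
  subset : Δ ⊆ Φ
  indep : LinearIndependent ℝ (fun a : {x // x ∈ Δ} => (a : E))
  root_decomp : ∀ β ∈ Φ, (∃ c : E → ℕ, β = ∑ α ∈ Δ, (c α : ℝ) • α) ∨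
      (∃ c : E → ℕ, β = -(∑ α ∈ Δ, (c α : ℝ) • α))

open Classical in
/-- The positive roots `Φ⁺` of `Φ` with respect to the base `Δ`. -/
noncomputable def posRoots (Φ Δ : Finset E) : Finset E :=
  Φ.filter fun β => ∃ c : E → ℕ, β = ∑ α ∈ Δ, (c α : ℝ) • α

/-- `ρ`, one-half the sum of the positive roots. -/
noncomputable def rho (Φ Δ : Finset E) : E := (2⁻¹ : ℝ) • ∑ β ∈ posRoots Φ Δ, β

/-- The Weyl group of `Φ`, the subgroup of `GL(E)` generated by the reflections
`s_α : x ↦ x − ⟨x,α∨⟩α` in the roots `α ∈ Φ`.  Applied to a subset `J` of the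
simple roots it yields the parabolic subgroup `W_J`. -/
def Weyl (Φ : Finset E) : Subgroup (E ≃ₗ[ℝ] E) :=
  Subgroup.closure { w : E ≃ₗ[ℝ] E | ∃ α ∈ Φ, ∀ x, w x = x - pair x α • α }

/-- The dot action `w·λ = w(λ+ρ) − ρ`. -/
noncomputable def dotAct (Φ Δ : Finset E) (w : E ≃ₗ[ℝ] E) (lam : E) : E :=
  w (lam + rho Φ Δ) - rho Φ Δ

/-- The weight lattice `X = {λ ∈ E : ⟨λ,α∨⟩ ∈ ℤ for all α ∈ Φ}`. -/
def weightLattice (Φ : Finset E) : Set E :=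
  { lam | ∀ α ∈ Φ, ∃ n : ℤ, pair lam α = (n : ℝ) }

/-- The root lattice `ℤΦ`. -/
def rootLattice (Φ : Finset E) : AddSubgroup E := AddSubgroup.closure (Φ : Set E)

/-- The bottom `p`-alcove `C_ℤ = {λ ∈ X : 0 < ⟨λ+ρ,β∨⟩ < p for all β ∈ Φ⁺}`. -/
def bottomAlcove (Φ Δ : Finset E) (p : ℕ) : Set E :=
  { lam ∈ weightLattice Φ | ∀ β ∈ posRoots Φ Δ,
      0 < pair (lam + rho Φ Δ) β ∧ pair (lam + rho Φ Δ) β < (p : ℝ) }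

/-- The closure `C̄_ℤ = {λ ∈ X : 0 ≤ ⟨λ+ρ,β∨⟩ ≤ p for all β ∈ Φ⁺}` of the
bottom `p`-alcove. -/
def closedAlcove (Φ Δ : Finset E) (p : ℕ) : Set E :=
  { lam ∈ weightLattice Φ | ∀ β ∈ posRoots Φ Δ,
      0 ≤ pair (lam + rho Φ Δ) β ∧ pair (lam + rho Φ Δ) β ≤ (p : ℝ) }

/-- Membership in `X⁺`, the set of dominant weights. -/
def isDominant (Φ Δ : Finset E) (lam : E) : Prop :=
  lam ∈ weightLattice Φ ∧ ∀ α ∈ Δ, 0 ≤ pair lam α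

/-- `a₀` is the highest short root of `Φ`: a root of minimal length such that
every root of the same length is `≤ a₀` (their difference is a nonnegative
integral combination of simple roots). -/
structure IsHighestShortRoot (Φ Δ : Finset E) (a₀ : E) : Prop where
  mem : a₀ ∈ Φ
  short : ∀ β ∈ Φ, ⟪a₀, a₀⟫ ≤ ⟪β, β⟫
  highest : ∀ β ∈ Φ, ⟪β, β⟫ = ⟪a₀, a₀⟫ →
      ∃ c : E → ℕ, a₀ - β = ∑ α ∈ Δ, (c α : ℝ) • α

/-! ### The coroot pairing and reflections -/

lemma pair_add (x y a : E) : pair (x + y) a = pair x a + pair y a := by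
  simp only [pair, inner_add_left]; ring

lemma pair_smul (t : ℝ) (x a : E) : pair (t • x) a = t * pair x a := by
  simp only [pair, real_inner_smul_left]; ring

lemma pair_neg_right (x a : E) : pair x (-a) = -pair x a := by
  simp only [pair, inner_neg_right, inner_neg_left]; ring

lemma pair_self {a : E} (ha : a ≠ 0) : pair a a = 2 :=
  mul_div_cancel_right₀ 2 (inner_self_ne_zero.mpr ha)

lemma pair_pos_iff {x a : E} : 0 < pair x a ↔ 0 < ⟪x, a⟫ := by
  rcases eq_or_ne a 0 with rfl | ha
  · simp [pair]
  · rw [pair, div_pos_iff_of_pos_right (real_inner_self_pos.mpr ha),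
      mul_pos_iff_of_pos_left two_pos]

lemma pair_nonneg_iff {x a : E} : 0 ≤ pair x a ↔ 0 ≤ ⟪x, a⟫ := by
  rw [← not_lt, ← not_lt, ← neg_pos, ← neg_pos (a := ⟪x, a⟫), ← pair_neg_right,
    ← inner_neg_right, pair_pos_iff]

-- Expand `0 < ⟪x - a, x - a⟫`.
lemma pair_lt_two {x a : E} (hle : ⟪x, x⟫ ≤ ⟪a, a⟫) (hne : x ≠ a) : pair x a < 2 := by
  rcases eq_or_ne a 0 with rfl | ha
  · simp [pair]
  · have hpos : 0 < ⟪x - a, x - a⟫ := real_inner_self_pos.mpr (sub_ne_zero.mpr hne)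
    rw [real_inner_sub_sub_self] at hpos
    rw [pair, div_lt_iff₀ (real_inner_self_pos.mpr ha)]
    linarith

/-- The orthogonal reflection `s_a : x ↦ x - ⟨x, a∨⟩a` in the hyperplane orthogonal to `a`, as a
linear isometry; it is the identity for `a = 0`. -/
noncomputable def hyperplaneReflection (a : E) : E ≃ₗᵢ[ℝ] E := (ℝ ∙ a)ᗮ.reflection

lemma hyperplaneReflection_apply (a x : E) : hyperplaneReflection a x = x - pair x a • a := by
  rw [hyperplaneReflection, Submodule.reflection_orthogonal_apply,
    Submodule.reflection_singleton_apply, neg_sub, pair, real_inner_self_eq_norm_sq,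
    real_inner_comm, mul_div_assoc, mul_smul, two_smul, two_smul, RCLike.ofReal_real_eq_id, id_eq]

lemma pair_map (e : E ≃ₗᵢ[ℝ] E) (x a : E) : pair (e x) (e a) = pair x a := by
  simp only [pair, LinearIsometryEquiv.inner_map_map]

variable {Φ Δ : Finset E}

lemma IsRootSystem.hyperplaneReflection_mem (hΦ : IsRootSystem Φ) {a b : E} (ha : a ∈ Φ)
    (hb : b ∈ Φ) : hyperplaneReflection a b ∈ Φ := by
  rw [hyperplaneReflection_apply]
  exact hΦ.reflect_mem a ha b hb

lemma IsRootSystem.neg_mem (hΦ : IsRootSystem Φ) {a : E} (ha : a ∈ Φ) : -a ∈ Φ := by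
  have hmem := hΦ.hyperplaneReflection_mem ha ha
  rwa [hyperplaneReflection, Submodule.reflection_orthogonalComplement_singleton_eq_neg] at hmem

lemma IsRootSystem.mem_weightLattice (hΦ : IsRootSystem Φ) {b : E} (hb : b ∈ Φ) :
    b ∈ weightLattice Φ :=
  fun α hα => hΦ.pair_int α hα b hb

-- The roots orthogonal to `A` are orthogonal to every other root `b`: if `⟪b, s⟫ ≠ 0` with `s ∈ A`,
-- then `b` is a multiple of the difference of `s` and its mirror image, which both lie in `A`.
lemma IsRootSystem.exists_inner_ne_zero (hΦ : IsRootSystem Φ) {A : Set E} (hAΦ : A ⊆ Φ)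
    (hA : A.Nonempty) (hrefl : ∀ b ∈ Φ, ∀ s ∈ A, hyperplaneReflection b s ∈ A) {γ : E}
    (hγ : γ ∈ Φ) : ∃ s ∈ A, ⟪s, γ⟫ ≠ 0 := by
  by_contra! hγA
  obtain ⟨t, ht⟩ := hA
  refine hΦ.irred {a ∈ (Φ : Set E) | ∀ s ∈ A, ⟪s, a⟫ = 0} {b ∈ (Φ : Set E) | ¬∀ s ∈ A, ⟪s, b⟫ = 0}
    (by ext; simp only [Set.mem_union, Set.mem_ofPred_eq]; tauto) ⟨γ, hγ, hγA⟩
    ⟨t, hAΦ ht, fun h => hΦ.ne_zero t (hAΦ ht) (inner_self_eq_zero.mp (h t ht))⟩ ?_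
  rintro a ⟨-, ha⟩ b ⟨hb, hbA⟩
  push Not at hbA
  obtain ⟨s, hs, hsb⟩ := hbA
  have hreflect : pair s b * ⟪b, a⟫ = 0 := by
    have := ha _ (hrefl b hb s hs)
    rwa [hyperplaneReflection_apply, inner_sub_left, ha s hs, real_inner_smul_left, zero_sub,
      neg_eq_zero] at this
  have hpair : pair s b ≠ 0 :=
    div_ne_zero (mul_ne_zero two_ne_zero hsb) (inner_self_ne_zero.mpr (hΦ.ne_zero b hb))
  rw [real_inner_comm]
  exact (mul_eq_zero.mp hreflect).resolve_left hpair

/-! ### Short roots -/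

/-- `b` is a short root, that is, a root of minimal length; if all roots have the same length,
all of them are short. -/
structure IsShort (Φ : Finset E) (b : E) : Prop where
  mem : b ∈ Φ
  inner_self_le : ∀ γ ∈ Φ, ⟪b, b⟫ ≤ ⟪γ, γ⟫

lemma IsRootSystem.exists_isShort (hΦ : IsRootSystem Φ) : ∃ b, IsShort Φ b :=
  let ⟨b, hb, hmin⟩ := Φ.exists_min_image (fun γ => ⟪γ, γ⟫) hΦ.nonempty
  ⟨b, hb, hmin⟩

lemma IsShort.inner_self_eq {b c : E} (hb : IsShort Φ b) (hc : IsShort Φ c) : ⟪b, b⟫ = ⟪c, c⟫ :=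
  le_antisymm (hb.inner_self_le c hc.mem) (hc.inner_self_le b hb.mem)

lemma IsShort.reflect (hΦ : IsRootSystem Φ) {a b : E} (hb : IsShort Φ b)
    (ha : a ∈ Φ) : IsShort Φ (hyperplaneReflection a b) where
  mem := hΦ.hyperplaneReflection_mem ha hb.mem
  inner_self_le := by simpa only [LinearIsometryEquiv.inner_map_map] using hb.inner_self_le

lemma IsShort.neg (hΦ : IsRootSystem Φ) {b : E} (hb : IsShort Φ b) : IsShort Φ (-b) where
  mem := hΦ.neg_mem hb.mem
  inner_self_le := by simpa only [inner_neg_neg] using hb.inner_self_le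

-- `⟨b, γ∨⟩ = 1`, so that `b - γ` is the mirror image of `b`.
lemma IsShort.sub (hΦ : IsRootSystem Φ) {b γ : E} (hb : IsShort Φ b) (hγ : γ ∈ Φ) (hne : b ≠ γ)
    (hpos : 0 < ⟪b, γ⟫) : IsShort Φ (b - γ) := by
  have hpair : pair b γ = 1 := by
    obtain ⟨n, hn⟩ := hΦ.pair_int γ hγ b hb.mem
    have hlt := pair_lt_two (hb.inner_self_le γ hγ) hne
    have hgt := pair_pos_iff.mpr hpos
    rw [hn] at hlt hgt ⊢
    norm_cast at hlt hgt ⊢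
    omega
  simpa only [hyperplaneReflection_apply, hpair, one_smul] using hb.reflect hΦ hγ

lemma IsShort.add_eq_zero_or (hΦ : IsRootSystem Φ) {b c : E} (hb : IsShort Φ b)
    (hc : IsShort Φ c) (hneg : ⟪b, c⟫ < 0) : b + c = 0 ∨ IsShort Φ (b + c) := by
  rw [or_iff_not_imp_left, add_eq_zero_iff_eq_neg, ← sub_neg_eq_add]
  exact fun hne => hb.sub hΦ (hΦ.neg_mem hc.mem) hne (by rwa [inner_neg_right, neg_pos])

lemma IsRootSystem.exists_isShort_inner_pos (hΦ : IsRootSystem Φ) {γ : E} (hγ : γ ∈ Φ) :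
    ∃ s, IsShort Φ s ∧ 0 < ⟪s, γ⟫ := by
  obtain ⟨s, hs, hne⟩ := hΦ.exists_inner_ne_zero (A := {s | IsShort Φ s}) (fun _ hs => hs.mem)
    hΦ.exists_isShort (fun _ hb _ hs => hs.reflect hΦ hb) hγ
  rcases hne.lt_or_gt with hneg | hpos
  · exact ⟨-s, hs.neg hΦ, by rwa [inner_neg_left, neg_pos]⟩
  · exact ⟨s, hs, hpos⟩

lemma IsRootSystem.mem_closure_isShort (hΦ : IsRootSystem Φ) {γ : E} (hγ : γ ∈ Φ) :
    γ ∈ AddSubmonoid.closure {b | IsShort Φ b} := by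
  obtain ⟨s, hs, hpos⟩ := hΦ.exists_isShort_inner_pos hγ
  by_cases heq : s = γ
  · exact AddSubmonoid.subset_closure (heq ▸ hs)
  · rw [← add_sub_cancel s γ, ← neg_sub s γ]
    exact add_mem (AddSubmonoid.subset_closure hs)
      (AddSubmonoid.subset_closure ((hs.sub hΦ hγ heq hpos).neg hΦ))

lemma IsRootSystem.rootLattice_le_closure_isShort (hΦ : IsRootSystem Φ) :
    (rootLattice Φ).toAddSubmonoid ≤ AddSubmonoid.closure {b | IsShort Φ b} := by
  rw [rootLattice, AddSubgroup.closure_toAddSubmonoid, AddSubmonoid.closure_le]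
  rintro γ (hγ | hγ)
  · exact hΦ.mem_closure_isShort hγ
  · exact hΦ.mem_closure_isShort (neg_neg γ ▸ hΦ.neg_mem hγ)

lemma exists_card_lt_of_inner_neg (hΦ : IsRootSystem Φ) {b c : E} {u : Multiset E}
    (hshort : ∀ x ∈ b ::ₘ c ::ₘ u, IsShort Φ x) (hneg : ⟪b, c⟫ < 0) :
    ∃ m : Multiset E, (∀ x ∈ m, IsShort Φ x) ∧ m.sum = (b ::ₘ c ::ₘ u).sum ∧
      m.card < (b ::ₘ c ::ₘ u).card := by
  simp only [Multiset.forall_mem_cons] at hshort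
  obtain ⟨hb, hc, hu⟩ := hshort
  rcases hb.add_eq_zero_or hΦ hc hneg with hzero | hadd
  · exact ⟨u, hu, by simp [← add_assoc, hzero], by simp⟩
  · exact ⟨(b + c) ::ₘ u, by simpa using ⟨hadd, hu⟩, by simp [add_assoc], by simp⟩

lemma IsRootSystem.exists_multiset_isShort_inner_nonneg (hΦ : IsRootSystem Φ) {σ : E}
    (hσ : σ ∈ rootLattice Φ) : ∃ m : Multiset E, (∀ x ∈ m, IsShort Φ x) ∧ m.sum = σ ∧
      ∀ b t, m = b ::ₘ t → ∀ c ∈ t, 0 ≤ ⟪b, c⟫ := by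
  obtain ⟨m, ⟨hshort, hsum⟩, hmin⟩ := exists_minimalFor_of_wellFoundedLT
    (fun m : Multiset E => (∀ x ∈ m, IsShort Φ x) ∧ m.sum = σ) Multiset.card
    (AddSubmonoid.exists_multiset_of_mem_closure (hΦ.rootLattice_le_closure_isShort hσ))
  refine ⟨m, hshort, hsum, ?_⟩
  rintro b t rfl c hc
  by_contra! hneg
  obtain ⟨u, rfl⟩ := Multiset.exists_cons_of_mem hc
  obtain ⟨m', hshort', hsum', hlt⟩ := exists_card_lt_of_inner_neg hΦ hshort hneg
  exact hlt.not_ge (hmin ⟨hshort', hsum'.trans hsum⟩ hlt.le)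

lemma IsRootSystem.exists_isShort_two_le_pair (hΦ : IsRootSystem Φ) {σ : E}
    (hσ : σ ∈ rootLattice Φ) (hne : σ ≠ 0) : ∃ b, IsShort Φ b ∧ 2 ≤ pair σ b := by
  obtain ⟨m, hshort, rfl, hinner⟩ := hΦ.exists_multiset_isShort_inner_nonneg hσ
  obtain ⟨b, hb⟩ := Multiset.exists_mem_of_ne_zero (s := m) (by rintro rfl; simp at hne)
  obtain ⟨t, rfl⟩ := Multiset.exists_cons_of_mem hb
  have hrest : 0 ≤ pair t.sum b := by
    rw [pair_nonneg_iff, real_inner_comm]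
    exact Multiset.sum_induction (fun x => 0 ≤ ⟪b, x⟫) t
      (fun x y hx hy => by rw [inner_add_right]; exact add_nonneg hx hy) (by simp) (hinner b t rfl)
  refine ⟨b, hshort b hb, ?_⟩
  rw [Multiset.sum_cons, pair_add, pair_self (hΦ.ne_zero b (hshort b hb).mem)]
  linarith

/-! ### The highest short root -/

lemma IsBase.exists_height (hΔ : IsBase Φ Δ) : ∃ f : Module.Dual ℝ E, ∀ α ∈ Δ, f α = 1 :=
  Module.exists_dual_forall_apply_eq_one (s := (Δ : Set E)) (v := id) hΔ.indep

lemma lt_apply_hyperplaneReflection (f : Module.Dual ℝ E) {a b : E} (hfa : 0 < f a)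
    (hneg : pair b a < 0) : f b < f (hyperplaneReflection a b) := by
  rw [hyperplaneReflection_apply, map_sub, map_smul, smul_eq_mul]
  linarith [mul_neg_of_neg_of_pos hneg hfa]

lemma isDominant.inner_sum_nonneg {lam : E} (hlam : isDominant Φ Δ lam) (c : E → ℕ) :
    0 ≤ ⟪lam, ∑ α ∈ Δ, (c α : ℝ) • α⟫ := by
  rw [inner_sum]
  refine Finset.sum_nonneg fun α hα => ?_
  rw [real_inner_smul_right]
  exact mul_nonneg (Nat.cast_nonneg _) (pair_nonneg_iff.mp (hlam.2 α hα))

namespace IsHighestShortRoot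

variable {a₀ : E}

lemma isShort (ha₀ : IsHighestShortRoot Φ Δ a₀) : IsShort Φ a₀ :=
  ⟨ha₀.mem, ha₀.short⟩

lemma dominant (hΦ : IsRootSystem Φ) (hΔ : IsBase Φ Δ) (ha₀ : IsHighestShortRoot Φ Δ a₀) :
    isDominant Φ Δ a₀ := by
  refine ⟨hΦ.mem_weightLattice ha₀.mem, fun α hα => ?_⟩
  by_contra! hneg
  obtain ⟨f, hf⟩ := hΔ.exists_height
  have hlt := lt_apply_hyperplaneReflection f (hf α hα ▸ one_pos) hneg
  have hshort := ha₀.isShort.reflect hΦ (hΔ.subset hα)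
  obtain ⟨c, hc⟩ := ha₀.highest _ hshort.mem (hshort.inner_self_eq ha₀.isShort)
  have hle : 0 ≤ f (a₀ - hyperplaneReflection α a₀) := by
    rw [hc, map_sum]
    exact Finset.sum_nonneg fun β hβ => by simp [hf β hβ]
  rw [map_sub] at hle
  linarith

-- `⟪a₀ - b, a₀ - b⟫ = -2⟪b, a₀ - b⟫ ≤ 0`, because `a₀` and `b` have the same length.
lemma eq_of_isDominant (ha₀ : IsHighestShortRoot Φ Δ a₀) {b : E} (hb : IsShort Φ b)
    (hdom : isDominant Φ Δ b) : b = a₀ := by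
  obtain ⟨c, hc⟩ := ha₀.highest b hb.mem (hb.inner_self_eq ha₀.isShort)
  have hinner : 0 ≤ ⟪b, a₀ - b⟫ := hc ▸ hdom.inner_sum_nonneg c
  have hnonpos : ⟪a₀ - b, a₀ - b⟫ ≤ 0 := by
    rw [inner_sub_right] at hinner
    rw [real_inner_sub_sub_self, ha₀.isShort.inner_self_eq hb, real_inner_comm b a₀]
    linarith
  exact (sub_eq_zero.mp (real_inner_self_nonpos.mp hnonpos)).symm

-- A counterexample of maximal height would be dominant, hence equal to `a₀`.
lemma isShort_induction (hΦ : IsRootSystem Φ) (hΔ : IsBase Φ Δ)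
    (ha₀ : IsHighestShortRoot Φ Δ a₀) {P : E → Prop} (base : P a₀)
    (step : ∀ α ∈ Δ, ∀ b, IsShort Φ b → P (hyperplaneReflection α b) → P b) {b : E}
    (hb : IsShort Φ b) : P b := by
  classical
  by_contra hPb
  obtain ⟨f, hf⟩ := hΔ.exists_height
  obtain ⟨c, hc, hmax⟩ := (Φ.filter fun x => IsShort Φ x ∧ ¬P x).exists_max_image f
    ⟨b, Finset.mem_filter.mpr ⟨hb.mem, hb, hPb⟩⟩
  obtain ⟨hcΦ, hcs, hPc⟩ := Finset.mem_filter.mp hc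
  have hdom : isDominant Φ Δ c := by
    refine ⟨hΦ.mem_weightLattice hcΦ, fun α hα => ?_⟩
    by_contra! hneg
    have hshort := hcs.reflect hΦ (hΔ.subset hα)
    exact (lt_apply_hyperplaneReflection f (hf α hα ▸ one_pos) hneg).not_ge
      (hmax _ (Finset.mem_filter.mpr ⟨hshort.mem, hshort, mt (step α hα c hcs) hPc⟩))
  exact hPc (ha₀.eq_of_isDominant hcs hdom ▸ base)

end IsHighestShortRoot

/-! ### Sums of distinct roots -/

/-- `μ` is a sum of distinct roots of `Φ`; the empty sum is allowed. -/
def IsSumOfDistinctRoots (Φ : Finset E) (μ : E) : Prop := ∃ S ⊆ Φ, μ = ∑ γ ∈ S, γ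

lemma IsSumOfDistinctRoots.reflect (hΦ : IsRootSystem Φ) {μ a : E}
    (hμ : IsSumOfDistinctRoots Φ μ) (ha : a ∈ Φ) :
    IsSumOfDistinctRoots Φ (hyperplaneReflection a μ) := by
  obtain ⟨S, hS, rfl⟩ := hμ
  refine ⟨S.map (hyperplaneReflection a).toEquiv.toEmbedding, fun x hx => ?_, ?_⟩
  · obtain ⟨γ, hγ, rfl⟩ := Finset.mem_map.mp hx
    exact hΦ.hyperplaneReflection_mem ha (hS hγ)
  · simp

lemma mem_posRoots {γ : E} :
    γ ∈ posRoots Φ Δ ↔ γ ∈ Φ ∧ ∃ c : E → ℕ, γ = ∑ α ∈ Δ, (c α : ℝ) • α := by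
  classical exact Finset.mem_filter

lemma isDominant.inner_nonneg_of_mem_posRoots {lam γ : E} (hlam : isDominant Φ Δ lam)
    (hγ : γ ∈ posRoots Φ Δ) : 0 ≤ ⟪γ, lam⟫ := by
  obtain ⟨c, rfl⟩ := (mem_posRoots.mp hγ).2
  rw [real_inner_comm]
  exact hlam.inner_sum_nonneg c

lemma isDominant.inner_nonpos_of_notMem_posRoots (hΔ : IsBase Φ Δ) {lam γ : E}
    (hlam : isDominant Φ Δ lam) (hγ : γ ∈ Φ) (hγpos : γ ∉ posRoots Φ Δ) : ⟪γ, lam⟫ ≤ 0 := by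
  rcases hΔ.root_decomp γ hγ with hpos | ⟨c, rfl⟩
  · exact absurd (mem_posRoots.mpr ⟨hγ, hpos⟩) hγpos
  · rw [inner_neg_left, neg_nonpos, real_inner_comm]
    exact hlam.inner_sum_nonneg c

lemma IsSumOfDistinctRoots.inner_le_of_isDominant (hΔ : IsBase Φ Δ) {μ lam : E}
    (hμ : IsSumOfDistinctRoots Φ μ) (hlam : isDominant Φ Δ lam) :
    ⟪μ, lam⟫ ≤ 2 * ⟪rho Φ Δ, lam⟫ := by
  classical
  obtain ⟨S, hS, rfl⟩ := hμ
  calc ⟪∑ γ ∈ S, γ, lam⟫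
      = ∑ γ ∈ S ∩ posRoots Φ Δ, ⟪γ, lam⟫ + ∑ γ ∈ S \ posRoots Φ Δ, ⟪γ, lam⟫ := by
        rw [sum_inner, Finset.sum_inter_add_sum_sdiff]
    _ ≤ ∑ γ ∈ S ∩ posRoots Φ Δ, ⟪γ, lam⟫ :=
        add_le_of_nonpos_right <| Finset.sum_nonpos fun γ hγ =>
          have ⟨hγS, hγpos⟩ := Finset.mem_sdiff.mp hγ
          hlam.inner_nonpos_of_notMem_posRoots hΔ (hS hγS) hγpos
    _ ≤ ∑ γ ∈ posRoots Φ Δ, ⟪γ, lam⟫ :=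
        Finset.sum_le_sum_of_subset_of_nonneg Finset.inter_subset_right fun γ hγ _ =>
          hlam.inner_nonneg_of_mem_posRoots hγ
    _ = 2 * ⟪rho Φ Δ, lam⟫ := by
        rw [rho, real_inner_smul_left, sum_inner, mul_inv_cancel_left₀ two_ne_zero]

lemma IsSumOfDistinctRoots.pair_le (hΦ : IsRootSystem Φ) (hΔ : IsBase Φ Δ) {a₀ : E}
    (ha₀ : IsHighestShortRoot Φ Δ a₀) {μ b : E} (hμ : IsSumOfDistinctRoots Φ μ)
    (hb : IsShort Φ b) : pair μ b ≤ 2 * pair (rho Φ Δ) a₀ := by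
  refine ha₀.isShort_induction hΦ hΔ
    (P := fun b => ∀ μ, IsSumOfDistinctRoots Φ μ → pair μ b ≤ 2 * pair (rho Φ Δ) a₀)
    (fun μ hμ => ?_) (fun α hα b _ ih μ hμ => ?_) hb μ hμ
  · have hinner := hμ.inner_le_of_isDominant hΔ (ha₀.dominant hΦ hΔ)
    rw [pair, pair, ← mul_div_assoc]
    gcongr
    exact real_inner_self_nonneg
  · rw [← pair_map (hyperplaneReflection α)]
    exact ih _ (hμ.reflect hΦ (hΔ.subset hα))

theorem statement5_general (hΦ : IsRootSystem Φ) (hΔ : IsBase Φ Δ) {a₀ : E}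
    (ha₀ : IsHighestShortRoot Φ Δ a₀) {p : ℝ} (hbig : 3 * pair (rho Φ Δ) a₀ < p) {μ₁ μ₂ μ₃ σ : E}
    (hμ₁ : IsSumOfDistinctRoots Φ μ₁) (hμ₂ : IsSumOfDistinctRoots Φ μ₂)
    (hμ₃ : IsSumOfDistinctRoots Φ μ₃) (hσ : σ ∈ rootLattice Φ) (heq : μ₁ + μ₂ = μ₃ + p • σ) :
    σ = 0 := by
  by_contra hne
  obtain ⟨b, hb, htwo⟩ := hΦ.exists_isShort_two_le_pair hσ hne
  have hle₁ := hμ₁.pair_le hΦ hΔ ha₀ hb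
  have hle₂ := hμ₂.pair_le hΦ hΔ ha₀ hb
  have hle₃ := hμ₃.pair_le hΦ hΔ ha₀ (hb.neg hΦ)
  rw [pair_neg_right] at hle₃
  have hpair : pair μ₁ b + pair μ₂ b = pair μ₃ b + p * pair σ b := by
    rw [← pair_add, heq, pair_add, pair_smul]
  have hrho : 0 ≤ pair (rho Φ Δ) a₀ := by
    have hzero : IsSumOfDistinctRoots Φ 0 := ⟨∅, Finset.empty_subset Φ, Finset.sum_empty.symm⟩
    simpa [pair] using hzero.pair_le hΦ hΔ ha₀ hb
  have hp : p * 2 ≤ p * pair σ b := mul_le_mul_of_nonneg_left htwo (by linarith)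
  linarith

/-- Let `p` be a prime with `p > 3(h−1)`.  For `i ∈ {1,2,3}` let
`μᵢ` be a sum of distinct roots of `Φ`.  If `μ₁ + μ₂ = μ₃ + pσ` for some
`σ ∈ ℤΦ`, then `σ = 0`. -/
theorem statement5
    (Φ Δ : Finset E) (hΦ : IsRootSystem Φ) (hΔ : IsBase Φ Δ)
    (a₀ : E) (ha₀ : IsHighestShortRoot Φ Δ a₀)
    (h : ℕ) (hcox : (h : ℝ) = pair (rho Φ Δ) a₀ + 1)
    (p : ℕ) (hp : p.Prime) (hbig : 3 * (h - 1) < p)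
    (S₁ S₂ S₃ : Finset E) (hS₁ : S₁ ⊆ Φ) (hS₂ : S₂ ⊆ Φ) (hS₃ : S₃ ⊆ Φ)
    (μ₁ μ₂ μ₃ : E)
    (hμ₁ : μ₁ = ∑ γ ∈ S₁, γ) (hμ₂ : μ₂ = ∑ γ ∈ S₂, γ) (hμ₃ : μ₃ = ∑ γ ∈ S₃, γ)
    (σ : E) (hσ : σ ∈ rootLattice Φ)
    (heq : μ₁ + μ₂ = μ₃ + (p : ℝ) • σ) :
    σ = 0 := by
  have hreal : (3 * h : ℝ) < p + 3 := by exact_mod_cast (by omega : 3 * h < p + 3)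
  exact statement5_general hΦ hΔ ha₀ (by linarith) ⟨S₁, hS₁, hμ₁⟩ ⟨S₂, hS₂, hμ₂⟩
    ⟨S₃, hS₃, hμ₃⟩ hσ heq

end PaperDNN
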